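/- If R is a u-S-coherent ring with respect to some s ∈ S, then the localization R_s of R at the multiplicative set {1, s, s², …} is a coherent ring. -/

import Mathlib

/-!
A finitely generated ideal `J` of `R_s` is the localization of a finitely generated ideal `I` of
`R`, obtained by clearing denominators in a finite set of generators. If `f : F → I` has kernel and
cokernel killed by `s`, then composing it with the localization map `I → J` again exhibits its
target as a localization away from `s` (`isLocalizedModule_comp_of_smul`): both defects of `f`
vanish once `s` is inverted. Hence `J` is the base change of the finitely presented module `F`
to `R_s`, and is therefore finitely presented.
-/

universe u

variable {R : Type u} [CommRing R]

/-- `M` is uniformly `S`-finitely presented with respect to `s`. -/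
def UsFPWrt {R : Type u} [CommRing R] (s : R) (M : Type u) [AddCommGroup M] [Module R M] :
    Prop :=
  ∃ (F : Type u) (_ : AddCommGroup F) (_ : Module R F) (f : F →ₗ[R] M),
    Module.FinitePresentation R F ∧ (∀ x ∈ LinearMap.ker f, s • x = 0) ∧
      (∀ m : M, s • m ∈ LinearMap.range f)

/-- Precomposing a localization map away from `s` with a linear map whose kernel and cokernel are
killed by `s` gives a localization map away from `s`. -/
lemma isLocalizedModule_comp_of_smul {A F M N : Type*} [CommRing A]
    [AddCommGroup F] [Module A F] [AddCommGroup M] [Module A M] [AddCommGroup N] [Module A N]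
    (s : A) (f : F →ₗ[A] M) (g : M →ₗ[A] N) [IsLocalizedModule (Submonoid.powers s) g]
    (hker : ∀ x ∈ LinearMap.ker f, s • x = 0) (hrange : ∀ m : M, s • m ∈ LinearMap.range f) :
    IsLocalizedModule (Submonoid.powers s) (g ∘ₗ f) where
  map_units := IsLocalizedModule.map_units g
  surj y := by
    obtain ⟨⟨m, c⟩, hm⟩ := IsLocalizedModule.surj (Submonoid.powers s) g y
    obtain ⟨x, hx⟩ := hrange m
    refine ⟨⟨x, ⟨s, Submonoid.mem_powers s⟩ * c⟩, ?_⟩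
    simp only [mul_smul, hm, LinearMap.comp_apply, hx, map_smul, Submonoid.mk_smul]
  exists_of_eq {x₁ x₂} hx := by
    obtain ⟨c, hc⟩ := IsLocalizedModule.exists_of_eq (S := Submonoid.powers s) (f := g) hx
    refine ⟨⟨s, Submonoid.mem_powers s⟩ * c, ?_⟩
    have hmem : (c : A) • (x₁ - x₂) ∈ LinearMap.ker f := by
      rw [Submonoid.smul_def, Submonoid.smul_def] at hc
      rw [LinearMap.mem_ker, map_smul, map_sub, smul_sub, hc, sub_self]
    have hzero := hker _ hmem
    rw [smul_sub, smul_sub, sub_eq_zero] at hzero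
    simpa only [mul_smul, Submonoid.mk_smul, Submonoid.smul_def] using hzero

open scoped Pointwise in
/-- Clearing denominators: a finitely generated ideal of a localization is the localization of a
finitely generated ideal. -/
lemma exists_fg_localized'_eq {A B : Type*} [CommRing A] [CommRing B] [Algebra A B]
    (p : Submonoid A) [IsLocalization p B] (J : Ideal B) (hJ : J.FG) :
    ∃ I : Ideal A, I.FG ∧ Submodule.localized' B p (Algebra.linearMap A B) I = J := by
  classical
  obtain ⟨t, rfl⟩ := hJ
  refine ⟨Ideal.span (IsLocalization.finsetIntegerMultiple p t), ⟨_, rfl⟩, ?_⟩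
  rw [Ideal.span, Submodule.localized'_span, Algebra.coe_linearMap,
    IsLocalization.finsetIntegerMultiple_image]
  -- The common denominator acts as a unit of the localization, so it does not change the span.
  have hsmul : IsLocalization.commonDenomOfFinset p t • (t : Set B) =
      algebraMap A B (IsLocalization.commonDenomOfFinset p t) • (t : Set B) := by
    ext x
    simp only [Set.mem_smul_set, Submonoid.smul_def, algebraMap_smul]
  rw [hsmul]
  exact Submodule.span_smul_eq_of_isUnit _ _ (IsLocalization.map_units B _)

/-- If `R` is a `u`-`S`-coherent ring with respect to some `s ∈ S`, then the localization
`R_s` of `R` at `{1, s, s², …}` is a coherent ring (every finitely generated ideal is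
finitely presented). -/
theorem coherent_localization_away_of_usCoherent (S : Submonoid R) (s : R) (hs : s ∈ S)
    (h : ∀ I : Ideal R, I.FG → UsFPWrt s ↥I) :
    ∀ J : Ideal (Localization.Away s), J.FG →
      Module.FinitePresentation (Localization.Away s) ↥J := by
  intro J hJ
  obtain ⟨I, hI, rfl⟩ := exists_fg_localized'_eq (Submonoid.powers s) J hJ
  obtain ⟨F, _, _, f, hF, hker, hrange⟩ := h I hI
  let g : I →ₗ[R] Submodule.localized' (Localization.Away s) (Submonoid.powers s)
      (Algebra.linearMap R (Localization.Away s)) I :=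
    Submodule.toLocalized' (Localization.Away s) (Submonoid.powers s)
      (Algebra.linearMap R (Localization.Away s)) I
  have : IsLocalizedModule (Submonoid.powers s) g := Submodule.isLocalizedModule _ _ _ _
  have := isLocalizedModule_comp_of_smul s f g hker hrange
  exact FinitePresentation.of_isBaseChange (g ∘ₗ f)
    (IsLocalizedModule.isBaseChange (Submonoid.powers s) (Localization.Away s) (g ∘ₗ f))
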